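/- For every natural number n, every twice differentiable function ω : ℝ → ℂ satisfying ω''(x) − 2(x + 4x/(1+2x²))·ω'(x) + 2n·ω(x) = 0 for all x ∈ ℝ is a linear combination of α_n and β_n: there exist k₁, k₂ ∈ ℂ with ω(x) = k₁·α_n(x) + k₂·β_n(x) for all x ∈ ℝ, where α_n := Ĥ_n for n ∉ {1,2}, α₁ := h₁, and α₂ := h₂. -/

import Mathlib

/-- Physicists' Hermite polynomials via the Rodrigues formula. -/
noncomputable def Hr (n : ℕ) (x : ℝ) : ℝ :=
  (-1) ^ n * Real.exp (x ^ 2) * iteratedDeriv n (fun t => Real.exp (-t ^ 2)) x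

/-- The function Ĥₙ. -/
noncomputable def Hhatr (n : ℕ) (x : ℝ) : ℝ :=
  Hr n x + 4 * (n : ℝ) * Hr (n - 2) x + 4 * (n : ℝ) * ((n : ℝ) - 3) * Hr (n - 4) x

/-- The error function. -/
noncomputable def erf (x : ℝ) : ℝ :=
  (2 / Real.sqrt Real.pi) * ∫ t in (0 : ℝ)..x, Real.exp (-t ^ 2)

/-- The non-polynomial solution Ĥ₁. -/
noncomputable def h1 (x : ℝ) : ℝ :=
  4 * x + Real.sqrt Real.pi * Real.exp (x ^ 2) * (1 - 2 * x ^ 2) * (1 - erf x)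

/-- The non-polynomial solution Ĥ₂. -/
noncomputable def h2 (x : ℝ) : ℝ :=
  2 + 4 * x ^ 2 + 4 * Real.sqrt Real.pi * x * Real.exp (x ^ 2) * (1 - erf x)

/-- αₙ : Ĥₙ for n ∉ {1,2}, the non-polynomial solutions h₁, h₂ for n = 1, 2. -/
noncomputable def alphaF (n : ℕ) (x : ℝ) : ℂ :=
  if n = 1 then (h1 x : ℂ) else if n = 2 then (h2 x : ℂ) else (Hhatr n x : ℂ)

/-- Even coefficients c_{2k}(n) of the generalized power series. -/
noncomputable def ceven (n k : ℕ) : ℂ :=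
  if k = 0 then 1
  else if k = 1 then -(n : ℂ)
  else (-1) ^ k * 2 ^ k * (n : ℂ) * ((n : ℂ) - ((2 * (k : ℂ) - 1) ^ 2 + 1)) *
    (∏ j ∈ Finset.Icc 1 (k - 2), ((n : ℂ) - 2 * (1 + (j : ℂ)))) /
      (Nat.factorial (2 * k) : ℂ)

/-- Odd coefficients: `codd n k` is c_{2k-1}(n), for k ≥ 1. -/
noncomputable def codd (n k : ℕ) : ℂ :=
  if k ≤ 1 then 1
  else (-1) ^ (k + 1) * 2 ^ (k - 1) * ((n : ℂ) - ((2 * ((k : ℂ) - 1)) ^ 2 + 1)) *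
    (∏ j ∈ Finset.Icc 1 (k - 2), ((n : ℂ) - (2 * (1 + (j : ℂ)) - 1))) /
      (Nat.factorial (2 * k - 1) : ℂ)

/-- μₙ(z) = Σ_{k≥0} c_{2k}(n)·z^{2k}. -/
noncomputable def muF (n : ℕ) (z : ℂ) : ℂ := ∑' k : ℕ, ceven n k * z ^ (2 * k)

/-- νₙ(z) = Σ_{k≥1} c_{2k-1}(n)·z^{2k-1}. -/
noncomputable def nuF (n : ℕ) (z : ℂ) : ℂ := ∑' k : ℕ, codd n (k + 1) * z ^ (2 * k + 1)

/-- βₙ = μₙ + νₙ. -/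
noncomputable def betaF (n : ℕ) (z : ℂ) : ℂ := muF n z + nuF n z


lemma W_const (W : ℝ → ℂ)
    (hW : ∀ x : ℝ, ∃ W' : ℂ, HasDerivAt W W' x ∧
      (1 + 2 * (x:ℂ)^2) * W' = (10 * (x:ℂ) + 4 * (x:ℂ)^3) * W x) (x : ℝ) :
    W x = W 0 * ((Real.exp (x^2) * (1 + 2*x^2)^2 : ℝ) : ℂ) := by
  have hpos : ∀ x : ℝ, (0:ℝ) < 1 + 2*x^2 := fun x => by positivity
  let wt : ℝ → ℝ := fun x => Real.exp (x^2) * (1 + 2*x^2)^2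
  have hwpos : ∀ x, wt x ≠ 0 := fun x => by
    have := hpos x
    simp only [wt]; positivity
  have hwd : ∀ x, HasDerivAt wt (Real.exp (x^2) * (1+2*x^2) * (10*x+4*x^3)) x := by
    intro x
    have h1 : HasDerivAt (fun x : ℝ => x^2) (2*x) x := by simpa using hasDerivAt_pow 2 x
    have h2 : HasDerivAt (fun x : ℝ => 1+2*x^2) (2*(2*x)) x := (h1.const_mul 2).const_add 1
    have := h1.exp.mul (h2.pow 2)
    refine this.congr_deriv ?_
    simp only [Pi.pow_apply, Nat.cast_ofNat]
    ring
  have key : ∀ x : ℝ, HasDerivAt (fun x => W x / ((wt x : ℝ) : ℂ)) 0 x := by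
    intro x
    obtain ⟨W', h1, h2⟩ := hW x
    have hc : ((wt x : ℝ) : ℂ) ≠ 0 := by exact_mod_cast hwpos x
    have := h1.div (hwd x).ofReal_comp hc
    refine this.congr_deriv ?_
    rw [div_eq_zero_iff]; left
    simp only [wt]
    push_cast
    linear_combination (Complex.exp ((x:ℂ)^2) * (1 + 2*(x:ℂ)^2)) * h2
  have hconst := is_const_of_deriv_eq_zero (fun x => (key x).differentiableAt)
    (fun x => (key x).deriv) x 0
  have h0 : wt 0 = 1 := by simp [wt]
  simp only [h0, Complex.ofReal_one, div_one] at hconst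
  have hc : ((wt x : ℝ) : ℂ) ≠ 0 := by exact_mod_cast hwpos x
  rw [div_eq_iff hc] at hconst
  exact hconst

/-- solution data -/
def IsSol (n : ℕ) (f f' : ℝ → ℂ) : Prop :=
  ∀ x : ℝ, HasDerivAt f (f' x) x ∧ ∃ f'' : ℂ, HasDerivAt f' f'' x ∧
    (1 + 2 * (x:ℂ)^2) * f'' - (10 * (x:ℂ) + 4 * (x:ℂ)^3) * f' x
      + 2 * (n:ℂ) * (1 + 2 * (x:ℂ)^2) * f x = 0

lemma wron {n : ℕ} {f f' g g' : ℝ → ℂ} (hf : IsSol n f f') (hg : IsSol n g g') (x : ℝ) :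
    f x * g' x - f' x * g x = (f 0 * g' 0 - f' 0 * g 0) *
      ((Real.exp (x^2) * (1 + 2*x^2)^2 : ℝ) : ℂ) := by
  refine W_const (fun x => f x * g' x - f' x * g x) (fun x => ?_) x
  obtain ⟨h1, f'', h2, h3⟩ := hf x
  obtain ⟨k1, g'', k2, k3⟩ := hg x
  refine ⟨_, (h1.mul k2).sub (h2.mul k1), ?_⟩
  linear_combination f x * k3 - g x * h3

lemma cramer {n : ℕ} {f f' g g' w w' : ℝ → ℂ} (hf : IsSol n f f') (hg : IsSol n g g')
    (hw : IsSol n w w') (h0 : f 0 * g' 0 - f' 0 * g 0 ≠ 0) :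
    ∃ k₁ k₂ : ℂ, ∀ x : ℝ, w x = k₁ * f x + k₂ * g x := by
  refine ⟨(w 0 * g' 0 - w' 0 * g 0) / (f 0 * g' 0 - f' 0 * g 0),
    (f 0 * w' 0 - f' 0 * w 0) / (f 0 * g' 0 - f' 0 * g 0), fun x => ?_⟩
  have e1 := wron hf hg x
  have e2 := wron hw hg x
  have e3 := wron hf hw x
  have hc : ((Real.exp (x^2) * (1 + 2*x^2)^2 : ℝ) : ℂ) ≠ 0 := by
    have : Real.exp (x^2) * (1 + 2*x^2)^2 ≠ 0 := by positivity
    exact_mod_cast this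
  set c := ((Real.exp (x^2) * (1 + 2*x^2)^2 : ℝ) : ℂ)
  set D := f 0 * g' 0 - f' 0 * g 0
  field_simp
  apply mul_right_cancel₀ hc
  linear_combination f x * e2 + g x * e3 - w x * e1

lemma real_sol {n : ℕ} {f f' f'' : ℝ → ℝ} (h1 : ∀ x, HasDerivAt f (f' x) x)
    (h2 : ∀ x, HasDerivAt f' (f'' x) x)
    (h3 : ∀ x, (1 + 2 * x^2) * f'' x - (10 * x + 4 * x^3) * f' x
      + 2 * (n:ℝ) * (1 + 2 * x^2) * f x = 0) :
    IsSol n (fun x => (f x : ℂ)) (fun x => (f' x : ℂ)) := by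
  intro x
  refine ⟨(h1 x).ofReal_comp, (f'' x : ℂ), (h2 x).ofReal_comp, ?_⟩
  have h := congrArg (fun t : ℝ => (t : ℂ)) (h3 x)
  push_cast at h ⊢
  exact h

/-! Hermite part -/

lemma gexp_cd : ContDiff ℝ ⊤ (fun t : ℝ => Real.exp (-t^2)) := by fun_prop

lemma g_deriv (n : ℕ) (x : ℝ) : HasDerivAt (iteratedDeriv n (fun t : ℝ => Real.exp (-t^2)))
    (iteratedDeriv (n+1) (fun t : ℝ => Real.exp (-t^2)) x) x := by
  rw [iteratedDeriv_succ]
  apply DifferentiableAt.hasDerivAt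
  have : ContDiff ℝ ⊤ (fun t : ℝ => Real.exp (-t^2)) := gexp_cd
  exact (this.differentiable_iteratedDeriv n (by exact_mod_cast WithTop.coe_lt_top _)) x

lemma g_one (x : ℝ) : iteratedDeriv 1 (fun t : ℝ => Real.exp (-t^2)) x
    = -2 * x * Real.exp (-x^2) := by
  rw [iteratedDeriv_one]
  have h1 : HasDerivAt (fun x : ℝ => -x^2) (-(2*x)) x := by
    have := (hasDerivAt_pow 2 x).neg
    exact this.congr_deriv (by push_cast; ring)
  rw [h1.exp.deriv]; ring

lemma g_rec (n : ℕ) : ∀ x : ℝ, iteratedDeriv (n+2) (fun t : ℝ => Real.exp (-t^2)) x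
    = -2 * x * iteratedDeriv (n+1) (fun t : ℝ => Real.exp (-t^2)) x
      - 2 * ((n:ℝ)+1) * iteratedDeriv n (fun t : ℝ => Real.exp (-t^2)) x := by
  induction n with
  | zero =>
    intro x
    have h := g_deriv 1 x
    have h0 := g_deriv 0 x
    have e : iteratedDeriv 1 (fun t : ℝ => Real.exp (-t^2)) =
      fun x => (-2 * x) * iteratedDeriv 0 (fun t : ℝ => Real.exp (-t^2)) x := by
      funext y; rw [g_one]; simp
    rw [e] at h
    have h' := ((hasDerivAt_id x).const_mul (-2)).mul h0
    have := h.unique h'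
    simp only [id, Nat.zero_add, Nat.reduceAdd] at this ⊢
    rw [this]; push_cast; ring
  | succ n ih =>
    intro x
    have h := g_deriv (n+2) x
    have e := funext ih
    rw [e] at h
    have h' := (((hasDerivAt_id x).const_mul (-2)).mul (g_deriv (n+1) x)).sub
      ((g_deriv n x).const_mul (2 * ((n:ℝ)+1)))
    have := h.unique h'
    simp only [id] at this
    rw [show n + 1 + 2 = n + 2 + 1 from rfl, this]
    push_cast; ring

lemma H_rec (n : ℕ) (x : ℝ) : Hr (n+2) x = 2*x*Hr (n+1) x - 2*((n:ℝ)+1)*Hr n x := by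
  unfold Hr; rw [g_rec]; ring

lemma H_deriv (n : ℕ) (x : ℝ) : HasDerivAt (Hr n) (2*x*Hr n x - Hr (n+1) x) x := by
  have h1 : HasDerivAt (fun x : ℝ => x^2) (2*x) x := by simpa using hasDerivAt_pow 2 x
  have := (h1.exp.const_mul ((-1)^n)).mul (g_deriv n x)
  refine this.congr_deriv ?_
  unfold Hr; ring

lemma H_deriv' (n : ℕ) (x : ℝ) : HasDerivAt (Hr (n+1)) (2*((n:ℝ)+1)*Hr n x) x := by
  refine (H_deriv (n+1) x).congr_deriv ?_
  rw [H_rec]; ring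

lemma H_zero (x : ℝ) : Hr 0 x = 1 := by
  simp [Hr, ← Real.exp_add]

lemma H_one (x : ℝ) : Hr 1 x = 2*x := by
  have : Real.exp (x^2) * Real.exp (-x^2) = 1 := by simp [← Real.exp_add]
  unfold Hr; rw [g_one]; linear_combination 2*x*this

lemma H_at0 (k : ℕ) : Hr (2*k) 0 ≠ 0 ∧ Hr (2*k+1) 0 = 0 := by
  induction k with
  | zero => simp [H_zero, H_one]
  | succ k ih =>
    have e1 := H_rec (2*k) 0
    have e2 := H_rec (2*k+1) 0
    rw [show 2*(k+1) = 2*k+2 by ring, e1]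
    refine ⟨?_, ?_⟩
    · rw [ih.2]
      have : (2*((2*k:ℕ):ℝ)+2) ≠ 0 := by positivity
      have h2 := mul_ne_zero this ih.1
      intro h; apply h2; linear_combination -h
    · rw [show 2*k+2+1 = 2*k+1+2 by ring, e2, ih.2]; ring

lemma hat_big (m : ℕ) : ∃ f' : ℝ → ℝ, IsSol (m+4) (fun x => (Hhatr (m+4) x : ℂ))
    (fun x => (f' x : ℂ)) ∧ Hhatr (m+4) 0 ≠ f' 0 := by
  have hH : Hhatr (m+4) = fun x => Hr (m+2+2) x + 4*((m:ℝ)+4) * Hr (m+1+1) x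
      + 4*((m:ℝ)+4)*((m:ℝ)+1) * Hr m x := by
    funext x; unfold Hhatr
    simp only [show m+4-2 = m+1+1 by omega, show m+4-4 = m by omega]
    push_cast; ring
  have hd1 : ∀ x, HasDerivAt (Hhatr (m+4)) (2*((m:ℝ)+4) * Hr (m+2+1) x
      + 4*((m:ℝ)+4) * (2*((m:ℝ)+2) * Hr (m+1) x)
      + 4*((m:ℝ)+4)*((m:ℝ)+1) * (2*x*Hr m x - Hr (m+1) x)) x := by
    intro x
    rw [hH]
    have := ((H_deriv' (m+3) x).add ((H_deriv' (m+1) x).const_mul (4*((m:ℝ)+4)))).add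
      ((H_deriv m x).const_mul (4*((m:ℝ)+4)*((m:ℝ)+1)))
    refine this.congr_deriv ?_
    push_cast; ring
  have hd2 : ∀ x, HasDerivAt (fun x => 2*((m:ℝ)+4) * Hr (m+2+1) x
      + 4*((m:ℝ)+4) * (2*((m:ℝ)+2) * Hr (m+1) x)
      + 4*((m:ℝ)+4)*((m:ℝ)+1) * (2*x*Hr m x - Hr (m+1) x))
      (2*((m:ℝ)+4) * (2*((m:ℝ)+3)*Hr (m+2) x)
      + 4*((m:ℝ)+4) * (2*((m:ℝ)+2) * (2*((m:ℝ)+1)*Hr m x))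
      + 4*((m:ℝ)+4)*((m:ℝ)+1) * (2*Hr m x + 2*x*(2*x*Hr m x - Hr (m+1) x)
        - (2*((m:ℝ)+1)*Hr m x))) x := by
    intro x
    have := (((H_deriv' (m+2) x).const_mul (2*((m:ℝ)+4))).add
      (((H_deriv' m x).const_mul (2*((m:ℝ)+2))).const_mul (4*((m:ℝ)+4)))).add
      (((((hasDerivAt_id x).const_mul 2).mul (H_deriv m x)).sub (H_deriv' m x)).const_mul
        (4*((m:ℝ)+4)*((m:ℝ)+1)))
    refine this.congr_deriv ?_
    simp only [id]
    push_cast; ring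
  refine ⟨_, real_sol hd1 hd2 ?_, ?_⟩
  · intro x
    rw [hH]
    simp only [H_rec (m+2) x, H_rec (m+1) x, H_rec m x]
    push_cast; ring
  · rw [hH]
    have e3 : Hr (m+2+1) 0 = _ := H_rec (m+1) 0
    simp only [H_rec (m+2) 0, e3, H_rec m 0]
    obtain ⟨k, hk | hk⟩ := Nat.even_or_odd' m
    · subst hk
      have h0 := H_at0 k
      rw [h0.2]
      intro h
      have h2 : (((2*k:ℕ):ℝ)+1) * Hr (2*k) 0 ≠ 0 := mul_ne_zero (by positivity) h0.1
      apply h2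
      push_cast at h ⊢
      linear_combination (-1/4) * h
    · subst hk
      have h0 := H_at0 k
      have h1 := (H_at0 (k+1)).1
      rw [show 2*(k+1) = 2*k+1+1 by ring] at h1
      rw [h0.2]
      intro h
      have h2 : (((2*k+1:ℕ):ℝ)+4) * Hr (2*k+1+1) 0 ≠ 0 := mul_ne_zero (by positivity) h1
      apply h2
      push_cast at h ⊢
      linear_combination (-1/4) * h

lemma hat_zero : IsSol 0 (fun x => (Hhatr 0 x : ℂ)) (fun x => (((0:ℝ) : ℝ) : ℂ)) ∧
    Hhatr 0 0 ≠ 0 := by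
  have e : Hhatr 0 = fun _ => 1 := by funext x; simp [Hhatr, H_zero]
  refine ⟨?_, ?_⟩
  · rw [e]
    refine real_sol (f := fun _ => 1) (f' := fun _ => 0) (f'' := fun _ => 0) (fun x => hasDerivAt_const x _)
      (fun x => hasDerivAt_const x _) (fun x => by simp)
  · simp [e]

lemma hat_three : ∃ f' : ℝ → ℝ, IsSol 3 (fun x => (Hhatr 3 x : ℂ))
    (fun x => (f' x : ℂ)) ∧ Hhatr 3 0 ≠ f' 0 := by
  have e : Hhatr 3 = fun x => 8*x^3+12*x := by
    funext x
    have e3 : Hr 3 x = _ := H_rec 1 x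
    have e2 : Hr 2 x = _ := H_rec 0 x
    simp only [Hhatr, e3, Nat.reduceSub, Nat.reduceAdd, e2, H_zero, H_one]
    push_cast; ring
  have hd1 : ∀ x, HasDerivAt (Hhatr 3) (24*x^2+12) x := by
    intro x; rw [e]
    have := ((hasDerivAt_pow 3 x).const_mul 8).add ((hasDerivAt_id x).const_mul 12)
    refine this.congr_deriv ?_
    push_cast; ring
  have hd2 : ∀ x : ℝ, HasDerivAt (fun x : ℝ => 24*x^2+12) (48*x) x := by
    intro x
    have := ((hasDerivAt_pow 2 x).const_mul 24).add_const 12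
    refine this.congr_deriv ?_
    push_cast; ring
  refine ⟨_, real_sol hd1 hd2 ?_, ?_⟩
  · intro x; rw [e]; push_cast; ring
  · rw [e]; norm_num

/-! erf part -/

noncomputable def EE (x : ℝ) : ℝ := Real.sqrt Real.pi * Real.exp (x^2) * (1 - erf x)

lemma EE_deriv (x : ℝ) : HasDerivAt EE (2*x*EE x - 2) x := by
  have h1 : HasDerivAt (fun x : ℝ => x^2) (2*x) x := by simpa using hasDerivAt_pow 2 x
  have hc : Continuous (fun t : ℝ => Real.exp (-t^2)) := by fun_prop
  have he : HasDerivAt erf ((2 / Real.sqrt Real.pi) * Real.exp (-x^2)) x :=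
    (intervalIntegral.integral_hasDerivAt_right (hc.intervalIntegrable _ _)
      (hc.stronglyMeasurableAtFilter _ _) hc.continuousAt).const_mul _
  have := (h1.exp.const_mul (Real.sqrt Real.pi)).mul (he.const_sub 1)
  refine this.congr_deriv ?_
  have hp : Real.sqrt Real.pi ≠ 0 := by positivity
  have : Real.exp (x^2) * Real.exp (-x^2) = 1 := by simp [← Real.exp_add]
  unfold EE
  field_simp
  linear_combination (-1) * this

lemma EE_zero : EE 0 = Real.sqrt Real.pi := by simp [EE, erf]

lemma h1_sol : ∃ f' : ℝ → ℝ, IsSol 1 (fun x => (h1 x : ℂ))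
    (fun x => (f' x : ℂ)) ∧ h1 0 ≠ f' 0 := by
  have e : h1 = fun x => 4*x + (1-2*x^2)*EE x := by funext x; unfold h1 EE; ring
  have hd1 : ∀ x, HasDerivAt h1 ((1+2*x^2)*(2-2*x*EE x)) x := by
    intro x; rw [e]
    have := ((hasDerivAt_id x).const_mul 4).add
      ((((hasDerivAt_pow 2 x).const_mul 2).const_sub 1).mul (EE_deriv x))
    refine this.congr_deriv ?_
    push_cast; ring
  have hd2 : ∀ x : ℝ, HasDerivAt (fun x : ℝ => (1+2*x^2)*(2-2*x*EE x))
      (4*x*(2-2*x*EE x) + (1+2*x^2)*(-2*EE x - 2*x*(2*x*EE x-2))) x := by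
    intro x
    have := (((hasDerivAt_pow 2 x).const_mul 2).const_add 1).mul
      ((((hasDerivAt_id x).const_mul 2).mul (EE_deriv x)).const_sub 2)
    refine this.congr_deriv ?_
    simp only [id, Pi.mul_apply]
    push_cast; ring
  refine ⟨_, real_sol hd1 hd2 ?_, ?_⟩
  · intro x; rw [e]; push_cast; ring
  · rw [e]; simp [EE_zero]
    intro h
    have h2 := Real.sq_sqrt Real.pi_pos.le
    rw [h] at h2
    have := Real.pi_lt_d2
    linarith

lemma h2_sol : ∃ f' : ℝ → ℝ, IsSol 2 (fun x => (h2 x : ℂ))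
    (fun x => (f' x : ℂ)) ∧ h2 0 ≠ f' 0 := by
  have e : h2 = fun x => 2+4*x^2 + 4*x*EE x := by funext x; unfold h2 EE; ring
  have hd1 : ∀ x, HasDerivAt h2 (4*(1+2*x^2)*EE x) x := by
    intro x; rw [e]
    have := (((hasDerivAt_pow 2 x).const_mul 4).const_add 2).add
      (((hasDerivAt_id x).const_mul 4).mul (EE_deriv x))
    refine this.congr_deriv ?_
    simp only [id]
    push_cast; ring
  have hd2 : ∀ x : ℝ, HasDerivAt (fun x : ℝ => 4*(1+2*x^2)*EE x)
      (16*x*EE x+4*(1+2*x^2)*(2*x*EE x-2)) x := by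
    intro x
    have := ((((hasDerivAt_pow 2 x).const_mul 2).const_add 1).const_mul 4).mul (EE_deriv x)
    refine this.congr_deriv ?_
    push_cast; ring
  refine ⟨_, real_sol hd1 hd2 ?_, ?_⟩
  · intro x; rw [e]; push_cast; ring
  · rw [e]; simp [EE_zero]
    intro h
    have h2 := Real.sq_sqrt Real.pi_pos.le
    have := Real.pi_gt_three
    nlinarith

lemma alpha_sol (n : ℕ) : ∃ f' : ℝ → ℂ, IsSol n (alphaF n) f' ∧ alphaF n 0 ≠ f' 0 := by
  rcases n with _ | _ | _ | _ | m
  · have := hat_zero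
    have e : alphaF 0 = fun x => (Hhatr 0 x : ℂ) := by funext x; simp [alphaF]
    refine ⟨_, by rw [e]; exact this.1, ?_⟩
    rw [e]; exact Complex.ofReal_injective.ne this.2
  · obtain ⟨f', h, h'⟩ := h1_sol
    have e : alphaF 1 = fun x => (h1 x : ℂ) := by funext x; simp [alphaF]
    refine ⟨_, by rw [zero_add, e]; exact h, ?_⟩
    rw [zero_add, e]; exact Complex.ofReal_injective.ne h'
  · obtain ⟨f', h, h'⟩ := h2_sol
    have e : alphaF 2 = fun x => (h2 x : ℂ) := by funext x; simp [alphaF]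
    refine ⟨_, by rw [zero_add, e]; exact h, ?_⟩
    rw [zero_add, e]; exact Complex.ofReal_injective.ne h'
  · obtain ⟨f', h, h'⟩ := hat_three
    have e : alphaF 3 = fun x => (Hhatr 3 x : ℂ) := by funext x; simp [alphaF]
    refine ⟨_, by rw [zero_add, e]; exact h, ?_⟩
    rw [zero_add, e]; exact Complex.ofReal_injective.ne h'
  · obtain ⟨f', h, h'⟩ := hat_big m
    have e : alphaF (m+4) = fun x => (Hhatr (m+4) x : ℂ) := by funext x; simp [alphaF]
    refine ⟨_, by rw [show m+1+1+1+1 = m+4 from rfl, e]; exact h, ?_⟩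
    rw [show m+1+1+1+1 = m+4 from rfl, e]; exact Complex.ofReal_injective.ne h'

/-! power series part -/

def Ent (a : ℕ → ℂ) : Prop := ∀ r : ℝ, 0 ≤ r → Summable fun m => ‖a m‖ * r^m

def DD (a : ℕ → ℂ) (m : ℕ) : ℂ := ((m:ℂ)+1) * a (m+1)

lemma Ent.D {a : ℕ → ℂ} (h : Ent a) : Ent (DD a) := by
  intro r hr
  have h1 := (summable_nat_add_iff 1).2 (h (2*(r+1)) (by positivity))
  refine Summable.of_nonneg_of_le (fun m => by positivity) (fun m => ?_) h1
  have e1 : ((m:ℝ)+1) ≤ 2^(m+1) := by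
    have := (Nat.lt_two_pow_self (n := m+1)).le
    exact_mod_cast this
  have e2 : r^m ≤ (r+1)^(m+1) := by
    calc r^m ≤ (r+1)^m := by gcongr; linarith
      _ ≤ (r+1)^(m+1) := pow_le_pow_right₀ (by linarith) (by omega)
  have e3 : ‖((m:ℂ)+1)‖ = (m:ℝ)+1 := by
    have := Complex.norm_natCast (m+1)
    push_cast at this; exact this
  rw [DD, norm_mul, e3, mul_pow]
  calc ((m:ℝ)+1) * ‖a (m+1)‖ * r^m ≤ 2^(m+1) * ‖a (m+1)‖ * (r+1)^(m+1) := by gcongr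
    _ = _ := by ring

lemma Ent.summable {a : ℕ → ℂ} (h : Ent a) (z : ℂ) : Summable fun m => a m * z^m := by
  refine Summable.of_norm ?_
  simpa [norm_mul, norm_pow] using h ‖z‖ (norm_nonneg _)

noncomputable def PS (a : ℕ → ℂ) (z : ℂ) : ℂ := ∑' m, a m * z^m

lemma Ent.hasSum {a : ℕ → ℂ} (h : Ent a) (z : ℂ) : HasSum (fun m => a m * z^m) (PS a z) :=
  (h.summable z).hasSum

lemma Ent.hasSumD {a : ℕ → ℂ} (h : Ent a) (z : ℂ) :
    HasSum (fun m => a m * ((m:ℂ) * z^(m-1))) (PS (DD a) z) := by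
  rw [← hasSum_nat_add_iff' 1]
  simp only [Finset.range_one, Finset.sum_singleton, Nat.cast_zero, zero_mul, mul_zero, sub_zero]
  refine (h.D.hasSum z).congr_fun ?_ |> id
  intro m
  simp only [DD, Nat.add_sub_cancel]; push_cast; ring

lemma Ent.hasDerivAt {a : ℕ → ℂ} (h : Ent a) (z : ℂ) :
    HasDerivAt (PS a) (PS (DD a) z) z := by
  have hR : 0 ≤ ‖z‖ + 1 := by positivity
  have hu : Summable (fun m => ‖a m‖ * ((m:ℝ) * (‖z‖+1)^(m-1))) := by
    rw [← summable_nat_add_iff 1]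
    refine (h.D (‖z‖+1) hR).congr ?_
    intro m
    have e3 : ‖((m:ℂ)+1)‖ = (m:ℝ)+1 := by
      have := Complex.norm_natCast (m+1)
      push_cast at this; exact this
    rw [DD, norm_mul, e3, Nat.add_sub_cancel]; push_cast; ring
  rw [← (h.hasSumD z).tsum_eq]
  refine hasDerivAt_tsum_of_isPreconnected (g := fun m z => a m * z^m) (t := Metric.ball 0 (‖z‖+1)) (y₀ := 0) hu Metric.isOpen_ball
    (convex_ball _ _).isPreconnected (fun m y _ => (hasDerivAt_pow m y).const_mul _)
    (fun m y hy => ?_) (by simpa using by positivity) (h.summable 0) (by simp)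
  rw [norm_mul, norm_mul, norm_pow, Complex.norm_natCast]
  have : ‖y‖ ≤ ‖z‖+1 := by simpa using (Metric.mem_ball.1 hy).le
  gcongr

lemma hs_congr {f g : ℕ → ℂ} {s : ℂ} (h : ∀ m, f m = g m) (hf : HasSum f s) : HasSum g s :=
  (funext h : f = g) ▸ hf

lemma PS_sol (n : ℕ) {a : ℕ → ℂ} (h : Ent a)
    (h0 : 2 * a 2 + 2 * n * a 0 = 0) (h1 : 6 * a 3 + (2*n-10) * a 1 = 0)
    (hrec : ∀ m : ℕ, ((m:ℂ)+4) * ((m:ℂ)+3) * a (m+4)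
      + (2*((m:ℂ)+2)^2 - 12*((m:ℂ)+2) + 2*n) * a (m+2) + 4*((n:ℂ)-m) * a m = 0) :
    IsSol n (fun x => PS a x) (fun x => PS (DD a) x) := by
  intro x
  refine ⟨(h.hasDerivAt x).comp_ofReal, PS (DD (DD a)) x, (h.D.hasDerivAt x).comp_ofReal, ?_⟩
  beta_reduce
  generalize (x:ℂ) = z
  have s0 := h.hasSum z
  have s1 : HasSum (fun m : ℕ => (m:ℂ) * a m * z^m) (z * PS (DD a) z) := by
    rw [← hasSum_nat_add_iff' 1]
    simp only [Finset.range_one, Finset.sum_singleton, Nat.cast_zero, zero_mul, sub_zero]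
    refine hs_congr (fun m => ?_) ((h.D.hasSum z).mul_left z)
    simp only [DD]; push_cast; ring
  have s2 : HasSum (fun m : ℕ => ((m:ℂ)*((m:ℂ)-1)) * a m * z^m) (z^2 * PS (DD (DD a)) z) := by
    rw [← hasSum_nat_add_iff' 2]
    simp only [Finset.sum_range_succ, Finset.range_zero, Finset.sum_empty, Nat.cast_zero, zero_mul, sub_zero, Nat.cast_one, sub_self, mul_zero, add_zero]
    refine hs_congr (fun m => ?_) ((h.D.D.hasSum z).mul_left (z^2))
    simp only [DD]; push_cast; ring
  have s3 := h.D.D.hasSum z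
  have F := ((s3.add (s2.mul_left 2)).sub (s1.mul_left 10)).add (s0.mul_left (2*(n:ℂ)))
  have G := ((s0.mul_left (4*(n:ℂ))).sub (s1.mul_left 4)).mul_left (z^2)
  rw [← hasSum_nat_add_iff' 2] at F
  have T := F.add G
  have hz : HasSum (fun _ : ℕ => (0:ℂ)) 0 := hasSum_zero
  have := T.unique (a₂ := 0) (by
    refine hs_congr (fun m => ?_) hz
    simp only [DD]; push_cast
    linear_combination (-z^(m+2)) * hrec m)
  simp only [Finset.sum_range_succ, Finset.range_zero, Finset.sum_empty, DD] at this
  push_cast at this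
  linear_combination this + h0 + z * h1

/-! coefficients -/

lemma ceven_rec (n k : ℕ) : (2*(k:ℂ)+4)*(2*(k:ℂ)+3) * ceven n (k+2)
    + (2*(2*(k:ℂ)+2)^2 - 12*(2*(k:ℂ)+2) + 2*n) * ceven n (k+1)
    + 4*((n:ℂ)-2*k) * ceven n k = 0 := by
  rcases k with _ | _ | k
  · simp [ceven, Nat.factorial]; ring
  · simp [ceven, Nat.factorial]; ring
  · have f1 : (Nat.factorial (2*(k+2)) : ℂ) ≠ 0 := by exact_mod_cast Nat.factorial_ne_zero _
    have f2 : (Nat.factorial (2*(k+3)) : ℂ) = (2*k+6)*(2*k+5)*Nat.factorial (2*(k+2)) := by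
      rw [show 2*(k+3) = 2*(k+2)+1+1 by ring, Nat.factorial_succ, Nat.factorial_succ]
      push_cast; ring
    have f3 : (Nat.factorial (2*(k+4)) : ℂ) = (2*k+8)*(2*k+7)*Nat.factorial (2*(k+3)) := by
      rw [show 2*(k+4) = 2*(k+3)+1+1 by ring, Nat.factorial_succ, Nat.factorial_succ]
      push_cast; ring
    have n1 : (2*(k:ℂ)+6) ≠ 0 := by exact_mod_cast (by omega : 2*k+6 ≠ 0)
    have n2 : (2*(k:ℂ)+5) ≠ 0 := by exact_mod_cast (by omega : 2*k+5 ≠ 0)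
    have n3 : (2*(k:ℂ)+8) ≠ 0 := by exact_mod_cast (by omega : 2*k+8 ≠ 0)
    have n4 : (2*(k:ℂ)+7) ≠ 0 := by exact_mod_cast (by omega : 2*k+7 ≠ 0)
    simp only [ceven, show k+1+1+2 = k+4 from rfl, show k+1+1+1 = k+3 from rfl,
      show k+1+1 = k+2 from rfl, show k+4-2 = k+1+1 by omega, show k+3-2 = k+1 by omega,
      show k+2-2 = k by omega, show ¬ k+4 = 0 by omega, show ¬ k+3 = 0 by omega,
      show ¬ k+2 = 0 by omega, show ¬ k+4 = 1 by omega, show ¬ k+3 = 1 by omega,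
      show ¬ k+2 = 1 by omega, if_false, f3, f2]
    rw [Finset.prod_Icc_succ_top (by omega), Finset.prod_Icc_succ_top (by omega)]
    generalize (∏ j ∈ Finset.Icc 1 k, ((n : ℂ) - 2 * (1 + (j : ℂ)))) = P
    generalize (Nat.factorial (2*(k+2)) : ℂ) = F at *
    push_cast
    have n5 : (2*((k:ℂ)+2)+4) = (2*(k:ℂ)+8) := by ring
    have n6 : (2*((k:ℂ)+2)+3) = (2*(k:ℂ)+7) := by ring
    rw [n5, n6]
    field_simp
    ring

lemma codd_rec (n k : ℕ) : (2*(k:ℂ)+5)*(2*(k:ℂ)+4) * codd n (k+3)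
    + (2*(2*(k:ℂ)+3)^2 - 12*(2*(k:ℂ)+3) + 2*n) * codd n (k+2)
    + 4*((n:ℂ)-(2*k+1)) * codd n (k+1) = 0 := by
  rcases k with _ | k
  · simp [codd, Nat.factorial]; ring
  · have f1 : (Nat.factorial (2*k+3) : ℂ) ≠ 0 := by exact_mod_cast Nat.factorial_ne_zero _
    have f2 : (Nat.factorial (2*k+5) : ℂ) = (2*k+5)*(2*k+4)*Nat.factorial (2*k+3) := by
      rw [show 2*k+5 = 2*k+3+1+1 by ring, Nat.factorial_succ, Nat.factorial_succ]
      push_cast; ring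
    have f3 : (Nat.factorial (2*k+7) : ℂ) = (2*k+7)*(2*k+6)*Nat.factorial (2*k+5) := by
      rw [show 2*k+7 = 2*k+5+1+1 by ring, Nat.factorial_succ, Nat.factorial_succ]
      push_cast; ring
    have n1 : (2*(k:ℂ)+4) ≠ 0 := by exact_mod_cast (by omega : 2*k+4 ≠ 0)
    have n2 : (2*(k:ℂ)+5) ≠ 0 := by exact_mod_cast (by omega : 2*k+5 ≠ 0)
    have n3 : (2*(k:ℂ)+6) ≠ 0 := by exact_mod_cast (by omega : 2*k+6 ≠ 0)
    have n4 : (2*(k:ℂ)+7) ≠ 0 := by exact_mod_cast (by omega : 2*k+7 ≠ 0)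
    simp only [codd, show k+1+3 = k+4 from rfl, show k+1+2 = k+3 from rfl,
      show k+1+1 = k+2 from rfl, show k+4-2 = k+1+1 by omega, show k+3-2 = k+1 by omega,
      show k+2-2 = k by omega, show ¬ k+4 ≤ 1 by omega, show ¬ k+3 ≤ 1 by omega,
      show ¬ k+2 ≤ 1 by omega, if_false, show 2*(k+4)-1 = 2*k+7 by omega,
      show 2*(k+3)-1 = 2*k+5 by omega, show 2*(k+2)-1 = 2*k+3 by omega,
      show k+4-1=k+3 by omega, show k+3-1=k+2 by omega, show k+2-1=k+1 by omega, f3, f2]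
    rw [Finset.prod_Icc_succ_top (by omega), Finset.prod_Icc_succ_top (by omega)]
    generalize (∏ j ∈ Finset.Icc 1 k, ((n : ℂ) - (2 * (1 + (j : ℂ))-1))) = P
    generalize (Nat.factorial (2*k+3) : ℂ) = F at *
    push_cast
    have n5 : (2*((k:ℂ)+1)+5) = (2*(k:ℂ)+7) := by ring
    have n6 : (2*((k:ℂ)+1)+4) = (2*(k:ℂ)+6) := by ring
    rw [n5, n6]
    field_simp
    ring

lemma prod_bound (n k : ℕ) (f : ℕ → ℂ) (hf : ∀ j, 1 ≤ j → ‖f j‖ ≤ ((n:ℝ)+4) * j) :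
    ‖∏ j ∈ Finset.Icc 1 k, f j‖ ≤ ((n:ℝ)+4)^k * (Nat.factorial k : ℝ) := by
  induction k with
  | zero => simp
  | succ k ih =>
    rw [Finset.prod_Icc_succ_top (by omega), norm_mul, Nat.factorial_succ]
    calc _ ≤ (((n:ℝ)+4)^k * (Nat.factorial k : ℝ)) * (((n:ℝ)+4) * ((k+1:ℕ):ℝ)) :=
          mul_le_mul ih (hf _ (by omega)) (norm_nonneg _) (by positivity)
      _ = _ := by push_cast; ring

lemma four_pow_bound (k : ℕ) : ((k:ℝ)+2)^2 ≤ 4 * 4^k := by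
  have h : ((k+1 : ℕ):ℝ) ≤ 2^k := by exact_mod_cast Nat.lt_two_pow_self (n := k)
  have h4 : (4:ℝ)^k = (2^k)^2 := by rw [← pow_mul, mul_comm, pow_mul]; norm_num
  rw [h4]; push_cast at h
  have hk : (0:ℝ) ≤ k := Nat.cast_nonneg k
  nlinarith

lemma fact_bound (k m : ℕ) (hm : 2*k ≤ m) :
    (Nat.factorial k : ℝ) * Nat.factorial k ≤ Nat.factorial m := by
  have h1 := Nat.le_of_dvd (Nat.factorial_pos _) (Nat.factorial_mul_factorial_dvd_factorial_add k k)
  have h2 := Nat.factorial_le hm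
  rw [← two_mul] at h1
  exact_mod_cast h1.trans h2

lemma coef_bound (n k m : ℕ) (A B Q P : ℂ) (hA : ‖A‖ ≤ 2^(k+2)) (hB : ‖B‖ ≤ (n:ℝ)+1)
    (hQ : ‖Q‖ ≤ ((n:ℝ)+20) * ((k:ℝ)+2)^2)
    (hP : ‖P‖ ≤ ((n:ℝ)+4)^k * (Nat.factorial k : ℝ)) (hm : 2*k ≤ m) :
    ‖A * B * Q * P / (Nat.factorial m : ℂ)‖ ≤
      (16*((n:ℝ)+1)*((n:ℝ)+20)) * ((8*((n:ℝ)+4))^k / (Nat.factorial k : ℝ)) := by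
  rw [norm_div, norm_mul, norm_mul, norm_mul, Complex.norm_natCast]
  have hf := fact_bound k m hm
  have hkp : (0:ℝ) < Nat.factorial k := by positivity
  have hQ' : ‖Q‖ ≤ ((n:ℝ)+20) * (4*4^k) := hQ.trans (by gcongr; exact four_pow_bound k)
  calc _ ≤ (2^(k+2) * ((n:ℝ)+1) * (((n:ℝ)+20) * (4*4^k)) *
        (((n:ℝ)+4)^k * (Nat.factorial k : ℝ))) / ((Nat.factorial k : ℝ) * Nat.factorial k) := by
        gcongr
    _ = _ := by
      rw [mul_pow, show (8:ℝ)^k = 2^k*4^k by rw [← mul_pow]; norm_num]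
      field_simp
      ring

lemma ceven_bound (n k : ℕ) : ‖ceven n (k+2)‖ ≤
      (16*((n:ℝ)+1)*((n:ℝ)+20)) * ((8*((n:ℝ)+4))^k / (Nat.factorial k : ℝ)) := by
  simp only [ceven, show ¬ k+2 = 0 by omega, show ¬ k+2 = 1 by omega, if_false,
    show k+2-2 = k by omega]
  apply coef_bound
  · simp
  · simp
  · have e : ((n:ℂ) - ((2*((k+2:ℕ):ℂ)-1)^2+1)) = (((n:ℝ) - ((2*((k:ℝ)+2)-1)^2+1) : ℝ) : ℂ) := by
      push_cast; ring
    rw [e, Complex.norm_real, Real.norm_eq_abs, abs_le]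
    have hk : (0:ℝ) ≤ k := Nat.cast_nonneg k
    have hn : (0:ℝ) ≤ n := Nat.cast_nonneg n
    have := mul_nonneg hn (sq_nonneg ((k:ℝ)+2))
    constructor <;> nlinarith [mul_nonneg hn hk, mul_nonneg (mul_nonneg hn hk) hk]
  · apply prod_bound
    intro j hj
    have e : ((n:ℂ) - 2*(1+(j:ℂ))) = (((n:ℝ) - 2*(1+(j:ℝ)) : ℝ) : ℂ) := by push_cast; ring
    rw [e, Complex.norm_real, Real.norm_eq_abs, abs_le]
    have hj' : (1:ℝ) ≤ j := by exact_mod_cast hj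
    have hn : (0:ℝ) ≤ n := Nat.cast_nonneg n
    constructor <;> nlinarith
  · omega

lemma codd_bound (n k : ℕ) : ‖codd n (k+2)‖ ≤
      (16*((n:ℝ)+1)*((n:ℝ)+20)) * ((8*((n:ℝ)+4))^k / (Nat.factorial k : ℝ)) := by
  simp only [codd, show ¬ k+2 ≤ 1 by omega, if_false,
    show k+2-2 = k by omega, show k+2-1 = k+1 by omega]
  rw [show ((-1:ℂ)) ^ (k + 2 + 1) * 2 ^ (k + 1) = ((-1:ℂ)) ^ (k + 2 + 1) * 2 ^ (k + 1) * 1 by ring]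
  apply coef_bound
  · simp only [norm_mul, norm_pow, norm_neg, norm_one, one_pow, one_mul, Complex.norm_ofNat]
    exact pow_le_pow_right₀ (by norm_num) (by omega)
  · simp
  · have e : ((n:ℂ) - ((2*(((k+2:ℕ):ℂ)-1))^2+1)) = (((n:ℝ) - ((2*((k:ℝ)+1))^2+1) : ℝ) : ℂ) := by
      push_cast; ring
    rw [e, Complex.norm_real, Real.norm_eq_abs, abs_le]
    have hk : (0:ℝ) ≤ k := Nat.cast_nonneg k
    have hn : (0:ℝ) ≤ n := Nat.cast_nonneg n
    have := mul_nonneg hn (sq_nonneg ((k:ℝ)+2))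
    constructor <;> nlinarith [mul_nonneg hn hk, mul_nonneg (mul_nonneg hn hk) hk]
  · apply prod_bound
    intro j hj
    have e : ((n:ℂ) - (2*(1+(j:ℂ))-1)) = (((n:ℝ) - (2*(1+(j:ℝ))-1) : ℝ) : ℂ) := by push_cast; ring
    rw [e, Complex.norm_real, Real.norm_eq_abs, abs_le]
    have hj' : (1:ℝ) ≤ j := by exact_mod_cast hj
    have hn : (0:ℝ) ≤ n := Nat.cast_nonneg n
    constructor <;> nlinarith
  · omega

lemma summ_aux (c : ℕ → ℂ) (C K : ℝ)
    (h : ∀ k, ‖c (k+2)‖ ≤ C * (K^k / (Nat.factorial k : ℝ))) (r : ℝ) (hr : 0 ≤ r) :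
    Summable fun k => ‖c (k+2)‖ * r^k := by
  have h1 := (Real.summable_pow_div_factorial (K*r)).mul_left C
  refine Summable.of_nonneg_of_le (fun m => by positivity) (fun k => ?_) h1
  calc _ ≤ C * (K^k / (Nat.factorial k : ℝ)) * r^k := by gcongr; exact h k
    _ = _ := by rw [mul_pow]; ring

noncomputable def aa (n m : ℕ) : ℂ := if Even m then ceven n (m/2) else codd n (m/2+1)

lemma aa_even (n k : ℕ) : aa n (2*k) = ceven n k := by
  simp [aa]

lemma aa_odd (n k : ℕ) : aa n (2*k+1) = codd n (k+1) := by
  have : ¬ Even (2*k+1) := by simp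
  simp only [aa, this, if_false]
  congr 2; omega

lemma aa_ent (n : ℕ) : Ent (aa n) := by
  intro r hr
  have he : Summable fun k => ‖aa n (2*k)‖ * r^(2*k) := by
    rw [← summable_nat_add_iff 2]
    refine ((summ_aux _ _ _ (ceven_bound n) (r^2) (by positivity)).mul_left (r^4)).congr ?_
    intro k; rw [aa_even, ← pow_mul]; ring
  have ho : Summable fun k => ‖aa n (2*k+1)‖ * r^(2*k+1) := by
    rw [← summable_nat_add_iff 1]
    refine ((summ_aux _ _ _ (codd_bound n) (r^2) (by positivity)).mul_left (r^3)).congr ?_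
    intro k; rw [aa_odd, ← pow_mul]; ring
  exact (HasSum.even_add_odd (f := fun m => ‖aa n m‖ * r^m) he.hasSum ho.hasSum).summable

lemma beta_eq (n : ℕ) (z : ℂ) : betaF n z = PS (aa n) z := by
  have hs := (aa_ent n).summable z
  have := tsum_even_add_odd (f := fun m => aa n m * z^m) (hs.comp_injective (i := fun k => 2*k) (fun a b h => by simpa using h))
    (hs.comp_injective (i := fun k => 2*k+1) (fun a b h => by simpa using h))
  rw [PS, ← this]
  simp [betaF, muF, nuF, aa_even, aa_odd]

lemma beta_sol (n : ℕ) : ∃ f' : ℝ → ℂ, IsSol n (fun x => betaF n x) f' ∧ betaF n (0:ℝ) = 1 ∧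
    f' 0 = 1 := by
  have a0 : aa n 0 = ceven n 0 := aa_even n 0
  have a2 : aa n 2 = ceven n 1 := aa_even n 1
  have a1 : aa n 1 = codd n 1 := aa_odd n 0
  have a3 : aa n 3 = codd n 2 := aa_odd n 1
  have pz : ∀ a, PS a 0 = a 0 := by
    intro a
    rw [PS, tsum_eq_single 0]
    · simp
    · intro m hm; simp [hm]
  refine ⟨fun x => PS (DD (aa n)) x, ?_, ?_, ?_⟩
  · simp only [beta_eq]
    refine PS_sol n (aa_ent n) ?_ ?_ ?_
    · rw [a0, a2]; simp [ceven]
    · rw [a1, a3]; simp [codd, Nat.factorial]; ring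
    · intro m
      obtain ⟨k, hk | hk⟩ := Nat.even_or_odd' m
      · subst hk
        rw [show 2*k+4 = 2*(k+2) by ring, show 2*k+2 = 2*(k+1) by ring, aa_even, aa_even, aa_even]
        push_cast
        exact ceven_rec n k
      · subst hk
        rw [show 2*k+1+4 = 2*(k+2)+1 by ring, show 2*k+1+2 = 2*(k+1)+1 by ring,
          aa_odd, aa_odd, aa_odd]
        push_cast
        linear_combination codd_rec n k
  · rw [beta_eq, Complex.ofReal_zero, pz, a0]; simp [ceven]
  · simp only [Complex.ofReal_zero, pz, DD, zero_add, a1]; simp [codd]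

theorem stmt18 (n : ℕ) (ω : ℝ → ℂ)
    (hd1 : Differentiable ℝ ω) (hd2 : Differentiable ℝ (deriv ω))
    (hode : ∀ x : ℝ,
      deriv (deriv ω) x
        - 2 * ((x : ℂ) + 4 * (x : ℂ) / (1 + 2 * (x : ℂ) ^ 2)) * deriv ω x
        + 2 * (n : ℂ) * ω x = 0) :
    ∃ k₁ k₂ : ℂ, ∀ x : ℝ, ω x = k₁ * alphaF n x + k₂ * betaF n (x : ℂ) := by
  have hw : IsSol n ω (deriv ω) := by
    intro x
    refine ⟨(hd1 x).hasDerivAt, _, (hd2 x).hasDerivAt, ?_⟩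
    have hx : (1 + 2 * (x:ℂ)^2) ≠ 0 := by
      have : (1 + 2 * x^2 : ℝ) ≠ 0 := by positivity
      exact_mod_cast this
    have h := hode x
    have e : (1 + 2 * (x:ℂ)^2) * (4 * (x : ℂ) / (1 + 2 * (x : ℂ) ^ 2)) = 4 * x := by
      field_simp
    linear_combination (1 + 2 * (x:ℂ)^2) * h + 2 * deriv ω x * e
  obtain ⟨a', ha, ha0⟩ := alpha_sol n
  obtain ⟨b', hb, hb0, hb1⟩ := beta_sol n
  refine cramer ha hb hw ?_
  simp only [hb0, hb1, mul_one]
  exact sub_ne_zero.2 ha0
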